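/- arXiv:2603.17660 — 2 statements merged into one kernel-verified Lean document; each statement's English description precedes it below -/
import Mathlib

section
/- For every integer t ≥ 3, the monomial w_2^{2^t-4}·w_4^{2^{t-2}-1} does not belong to the ideal I_{2^t,4} (equivalently, its image in F_2[w_2,w_3,w_4]/I_{2^t,4} is nonzero). This monomial is a nontrivial product of 2^t + 2^{t-2} - 5 positive-degree generators, realizing the cup-length of the subalgebra W_{2^t+1,4} of H^*(G̃_{2^t+1,4}; F_2). -/
open MvPolynomial

/-- The polynomials `g_r = g_r^{(4)}` in `F_2[w_2,w_3,w_4]` (variables `X 0 = w_2`,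
`X 1 = w_3`, `X 2 = w_4`): `g_0 = 1`, `g_r = 0` for `r < 0`, and
`g_r = w_2·g_{r-2} + w_3·g_{r-3} + w_4·g_{r-4}` for `r ≥ 1`. -/
noncomputable def g4 : ℤ → MvPolynomial (Fin 3) (ZMod 2)
  | r =>
    if r ≤ 0 then (if r = 0 then 1 else 0)
    else X 0 * g4 (r - 2) + X 1 * g4 (r - 3) + X 2 * g4 (r - 4)
  termination_by r => r.toNat
  decreasing_by all_goals omega

/-- The ideal `I_{n,4} = (g_{n-3}, g_{n-2}, g_{n-1}, g_n)` of `F_2[w_2,w_3,w_4]`. -/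
noncomputable def I4 (n : ℤ) : Ideal (MvPolynomial (Fin 3) (ZMod 2)) :=
  Ideal.span {g4 (n - 3), g4 (n - 2), g4 (n - 1), g4 n}

theorem hp_g_rec (r : ℤ) (h : 1 ≤ r) :
    g4 r = X 0 * g4 (r - 2) + X 1 * g4 (r - 3) + X 2 * g4 (r - 4) := by
  rw [g4, if_neg (by omega)]

theorem hp_g_neg (r : ℤ) (h : r < 0) : g4 r = 0 := by
  rw [g4, if_pos (by omega), if_neg (by omega)]

theorem hp_g_zero : g4 0 = 1 := by
  rw [g4]; simp

theorem hp_two : (2 : MvPolynomial (Fin 3) (ZMod 2)) = 0 := by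
  have := CharP.cast_eq_zero (MvPolynomial (Fin 3) (ZMod 2)) 2
  exact_mod_cast this

theorem hp_double (N : ℕ) : ∀ m : ℤ, m ≤ N →
    g4 (2 * m) = g4 m ^ 2 + X 0 * g4 (m - 1) ^ 2 + X 2 * g4 (m - 2) ^ 2 ∧
    g4 (2 * m + 1) = X 1 * g4 (m - 1) ^ 2 := by
  have h2 := hp_two
  induction N with
  | zero =>
    intro m hm
    rcases lt_or_eq_of_le hm with h | h
    · have h : m < 0 := by simpa using h
      rw [hp_g_neg (2 * m) (by omega), hp_g_neg m h, hp_g_neg (m - 1) (by omega),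
        hp_g_neg (m - 2) (by omega), hp_g_neg (2 * m + 1) (by omega)]
      simp
    · have h : m = 0 := by simpa using h
      subst h
      rw [hp_g_rec (2 * 0 + 1) (by omega)]
      norm_num
      rw [hp_g_neg (-1) (by omega), hp_g_neg (-2) (by omega), hp_g_neg (-3) (by omega), hp_g_zero]
      simp
  | succ N ih =>
    intro m hm
    push_cast at hm
    by_cases hmN : m ≤ N
    · exact ih m hmN
    have hm1 : 1 ≤ m := by omega
    obtain ⟨e1, o1⟩ := ih (m - 1) (by omega)
    obtain ⟨e2, o2⟩ := ih (m - 2) (by omega)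
    have E : g4 (2 * m) = g4 m ^ 2 + X 0 * g4 (m - 1) ^ 2 + X 2 * g4 (m - 2) ^ 2 := by
      rw [hp_g_rec (2 * m) (by omega), hp_g_rec m hm1,
        show 2 * m - 2 = 2 * (m - 1) by ring, show 2 * m - 3 = 2 * (m - 2) + 1 by ring,
        show 2 * m - 4 = 2 * (m - 2) by ring, e1, e2, o2,
        show m - 1 - 1 = m - 2 by ring, show m - 1 - 2 = m - 3 by ring,
        show m - 2 - 1 = m - 3 by ring, show m - 2 - 2 = m - 4 by ring]
      linear_combination (X 0 * X 2 * g4 (m - 3) ^ 2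
        - X 0 * X 1 * g4 (m - 2) * g4 (m - 3) - X 0 * X 2 * g4 (m - 2) * g4 (m - 4)
        - X 1 * X 2 * g4 (m - 3) * g4 (m - 4)) * h2
    refine ⟨E, ?_⟩
    rw [hp_g_rec (2 * m + 1) (by omega),
        show 2 * m + 1 - 2 = 2 * (m - 1) + 1 by ring, show 2 * m + 1 - 3 = 2 * (m - 1) by ring,
        show 2 * m + 1 - 4 = 2 * (m - 2) + 1 by ring, e1, o1, o2,
        show m - 1 - 1 = m - 2 by ring, show m - 1 - 2 = m - 3 by ring,
        show m - 2 - 1 = m - 3 by ring]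
    linear_combination (X 0 * X 1 * g4 (m - 2) ^ 2 + X 1 * X 2 * g4 (m - 3) ^ 2) * h2

theorem hp_even (m : ℤ) :
    g4 (2 * m) = g4 m ^ 2 + X 0 * g4 (m - 1) ^ 2 + X 2 * g4 (m - 2) ^ 2 :=
  (hp_double m.toNat m (by omega)).1

theorem hp_odd (m : ℤ) : g4 (2 * m + 1) = X 1 * g4 (m - 1) ^ 2 :=
  (hp_double m.toNat m (by omega)).2

theorem hp_n3 (k : ℕ) : g4 (2 ^ (k + 1) - 3) = 0 := by
  induction k with
  | zero => exact hp_g_neg _ (by norm_num)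
  | succ k ih =>
    rw [show (2 : ℤ) ^ (k + 1 + 1) - 3 = 2 * (2 ^ (k + 1) - 2) + 1 by ring, hp_odd,
      show (2 : ℤ) ^ (k + 1) - 2 - 1 = 2 ^ (k + 1) - 3 by ring, ih]
    simp

theorem hp_n1 (k : ℕ) : g4 (2 ^ (k + 1) - 1) = X 1 * g4 (2 ^ k - 2) ^ 2 := by
  rw [show (2 : ℤ) ^ (k + 1) - 1 = 2 * (2 ^ k - 1) + 1 by ring, hp_odd,
      show (2 : ℤ) ^ k - 1 - 1 = 2 ^ k - 2 by ring]

theorem hp_n2 (k : ℕ) : g4 (2 ^ (k + 2) - 2) =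
    g4 (2 ^ (k + 1) - 1) ^ 2 + X 0 * g4 (2 ^ (k + 1) - 2) ^ 2 := by
  rw [show (2 : ℤ) ^ (k + 2) - 2 = 2 * (2 ^ (k + 1) - 1) by ring, hp_even,
      show (2 : ℤ) ^ (k + 1) - 1 - 1 = 2 ^ (k + 1) - 2 by ring,
      show (2 : ℤ) ^ (k + 1) - 1 - 2 = 2 ^ (k + 1) - 3 by ring, hp_n3]
  simp

theorem hp_n0 (k : ℕ) : g4 (2 ^ (k + 1)) =
    g4 (2 ^ k) ^ 2 + X 0 * g4 (2 ^ k - 1) ^ 2 + X 2 * g4 (2 ^ k - 2) ^ 2 := by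
  rw [show (2 : ℤ) ^ (k + 1) = 2 * 2 ^ k by ring, hp_even]

/-- The ring `F_2[x][y]`. -/
abbrev HK := Polynomial (Polynomial (ZMod 2))

noncomputable def hx : HK := Polynomial.C Polynomial.X
noncomputable def hy : HK := Polynomial.X

noncomputable def haa : ℕ → HK
  | 0 => 1
  | 1 => hx
  | (k + 2) => hx * haa (k + 1) ^ 2 + hy ^ 2 * haa k ^ 4

noncomputable def hphi : MvPolynomial (Fin 3) (ZMod 2) →ₐ[ZMod 2] Polynomial HK :=
  aeval ![Polynomial.C hx, Polynomial.C hy, Polynomial.X]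

theorem hphi0 : hphi (X 0) = Polynomial.C hx := by simp [hphi]
theorem hphi1 : hphi (X 1) = Polynomial.C hy := by simp [hphi]
theorem hphi2 : hphi (X 2) = Polynomial.X := by simp [hphi]

theorem hp_phi_a (k : ℕ) : hphi (g4 (2 ^ (k + 1) - 2)) = Polynomial.C (haa k) ∧
    hphi (g4 (2 ^ (k + 2) - 2)) = Polynomial.C (haa (k + 1)) := by
  induction k with
  | zero =>
    constructor
    · norm_num [hp_g_zero, haa]
    · norm_num
      rw [hp_g_rec 2 (by norm_num)]
      norm_num [hp_g_zero, haa, hp_g_neg, hphi0]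
  | succ k ih =>
    refine ⟨ih.2, ?_⟩
    rw [hp_n2, hp_n1, map_add, map_pow, map_mul, map_mul, map_pow, map_pow, hphi1, hphi0, ih.1,
      show k + 1 + 1 = k + 2 from rfl, ih.2, haa]
    simp only [map_add, map_mul, map_pow]
    ring

theorem hp_phi_b (k : ℕ) :
    hphi (g4 (2 ^ (k + 2) - 1)) = Polynomial.C (hy * haa k ^ 2) := by
  rw [hp_n1, map_mul, map_pow, (hp_phi_a k).1, hphi1]
  simp

theorem hp_phi_c (k : ℕ) : (hphi (g4 (2 ^ (k + 2)))).Monic ∧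
    (hphi (g4 (2 ^ (k + 2)))).natDegree = 2 ^ k := by
  induction k with
  | zero =>
    have : hphi (g4 (2 ^ (0 + 2))) = Polynomial.X + Polynomial.C (hx ^ 2) := by
      norm_num
      rw [hp_g_rec 4 (by norm_num)]
      norm_num
      rw [hp_g_rec 2 (by norm_num), hp_g_rec 1 (by norm_num)]
      norm_num [hp_g_zero, hp_g_neg, hphi0, hphi2]
      ring
    rw [this]
    exact ⟨Polynomial.monic_X_add_C _, by rw [Polynomial.natDegree_X_add_C, pow_zero]⟩
  | succ k ih =>
    obtain ⟨hm, hd⟩ := ih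
    have e : hphi (g4 (2 ^ (k + 1 + 2))) = hphi (g4 (2 ^ (k + 2))) ^ 2 +
        (Polynomial.C (haa (k + 1) ^ 2) * Polynomial.X
          + Polynomial.C (hx * (hy * haa k ^ 2) ^ 2)) := by
      rw [show k + 1 + 2 = (k + 2) + 1 from rfl, hp_n0]
      simp only [map_add, map_mul, map_pow, hphi0, hphi2, hp_phi_b, (hp_phi_a k).2]
      ring
    have hd2 : (hphi (g4 (2 ^ (k + 2))) ^ 2).natDegree = 2 ^ (k + 1) := by
      rw [hm.natDegree_pow, hd]; ring
    have hlt : (Polynomial.C (haa (k + 1) ^ 2) * Polynomial.X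
          + Polynomial.C (hx * (hy * haa k ^ 2) ^ 2)).degree
          < (hphi (g4 (2 ^ (k + 2))) ^ 2).degree := by
      rw [Polynomial.degree_eq_natDegree (hm.pow 2).ne_zero, hd2]
      refine lt_of_le_of_lt Polynomial.degree_linear_le ?_
      have : 1 < 2 ^ (k + 1) := Nat.one_lt_two_pow (by omega)
      exact_mod_cast this
    rw [e]
    refine ⟨(hm.pow 2).add_of_left hlt, ?_⟩
    rw [Polynomial.natDegree_add_eq_left_of_degree_lt hlt, hd2]

/-- Lift a Cartier-type operator to polynomials. -/
noncomputable def hcart {A : Type*} [CommRing A] (o : A →+ A) (f : Polynomial A) :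
    Polynomial A :=
  ∑ j ∈ Finset.range (f.natDegree + 1), Polynomial.monomial j (o (f.coeff (2 * j + 1)))

theorem hcart_coeff {A : Type*} [CommRing A] (o : A →+ A) (f : Polynomial A) (k : ℕ) :
    (hcart o f).coeff k = o (f.coeff (2 * k + 1)) := by
  simp only [hcart, Polynomial.finsetSum_coeff, Polynomial.coeff_monomial]
  rw [Finset.sum_ite_eq']
  split_ifs with h
  · rfl
  · rw [Polynomial.coeff_eq_zero_of_natDegree_lt, map_zero]
    simp at h; omega

noncomputable def hcartHom {A : Type*} [CommRing A] (o : A →+ A) :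
    Polynomial A →+ Polynomial A :=
  AddMonoidHom.mk' (hcart o) (by
    intro f g
    ext k
    simp [hcart_coeff])

theorem hcartHom_coeff {A : Type*} [CommRing A] (o : A →+ A) (f : Polynomial A) (k : ℕ) :
    (hcartHom o f).coeff k = o (f.coeff (2 * k + 1)) := hcart_coeff o f k

theorem hcart_mul {A : Type*} [CommRing A] [CharP A 2] (o : A →+ A)
    (ho : ∀ h c, o (h * c ^ 2) = o h * c) (h c : Polynomial A) :
    hcartHom o (h * c ^ 2) = hcartHom o h * c := by
  induction c using Polynomial.induction_on' with
  | add p q hp hq =>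
    rw [CharTwo.add_sq, mul_add, map_add, hp, hq, mul_add]
  | monomial i a =>
    ext k
    rw [Polynomial.monomial_pow, hcartHom_coeff, ← Polynomial.C_mul_X_pow_eq_monomial,
      ← Polynomial.C_mul_X_pow_eq_monomial, ← mul_assoc, ← mul_assoc,
      Polynomial.coeff_mul_X_pow', Polynomial.coeff_mul_X_pow']
    by_cases hik : i ≤ k
    · rw [if_pos (by omega), if_pos hik, Polynomial.coeff_mul_C, Polynomial.coeff_mul_C, ho,
        hcartHom_coeff]
      congr 3
      omega
    · rw [if_neg (by omega), if_neg hik, map_zero]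

noncomputable def hO : HK →+ HK := hcartHom (hcartHom (AddMonoidHom.id (ZMod 2)))

theorem hO_mul (h c : HK) : hO (h * c ^ 2) = hO h * c := by
  apply hcart_mul
  apply hcart_mul
  intro h c
  have : c ^ 2 = c := by revert c; decide
  simp [this]

theorem hO_xy : hO (hx * hy) = 1 := by
  ext i j
  rw [hO, hcartHom_coeff, hcartHom_coeff, hx, hy, Polynomial.coeff_C_mul, Polynomial.coeff_X,
    Polynomial.coeff_one]
  by_cases hi : i = 0
  · subst hi
    by_cases hj : j = 0
    · subst hj; simp
    · simp [Polynomial.coeff_X, Polynomial.coeff_one, hj]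
  · rw [if_neg (by omega), if_neg hi]; simp

theorem hO_y : hO hy = 0 := by
  ext i j
  rw [hO, hcartHom_coeff, hcartHom_coeff, hy, Polynomial.coeff_X]
  split_ifs <;> simp [Polynomial.coeff_one]

theorem haa_mod (k : ℕ) : (∃ r, haa k = hx ^ (2 ^ k - 1) + hy * r) ∧
    ∃ r, haa (k + 1) = hx ^ (2 ^ (k + 1) - 1) + hy * r := by
  induction k with
  | zero => exact ⟨⟨0, by simp [haa]⟩, ⟨0, by simp [haa]⟩⟩
  | succ k ih =>
    refine ⟨ih.2, ?_⟩
    obtain ⟨r, hr⟩ := ih.2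
    have hp : 2 ^ (k + 1 + 1) - 1 = 2 * (2 ^ (k + 1) - 1) + 1 := by
      have := Nat.one_le_two_pow (n := k + 1)
      rw [pow_succ 2 (k + 1)]; omega
    rw [haa, hr, hp]
    generalize 2 ^ (k + 1) - 1 = p
    exact ⟨hx * (2 * hx ^ p * r + hy * r ^ 2) + hy * haa k ^ 4, by ring⟩

theorem hxy_ndvd (p : ℕ) : ¬ hy ∣ hx ^ p := by
  intro h
  rw [hy, hx, Polynomial.X_dvd_iff, ← Polynomial.C_pow, Polynomial.coeff_C_zero] at h
  exact pow_ne_zero _ Polynomial.X_ne_zero h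

theorem hy_ndvd (k : ℕ) : ¬ hy ∣ haa k := by
  obtain ⟨r, hr⟩ := (haa_mod k).1
  rw [hr, dvd_add_left (dvd_mul_right _ _)]
  exact hxy_ndvd _

noncomputable def hJ (k : ℕ) : Ideal HK := Ideal.span {haa (k + 1), hy * haa k ^ 2}

theorem hJ_step (k : ℕ) (u : HK) (hu : hy * u ∈ hJ (k + 1)) : hO u ∈ hJ k := by
  obtain ⟨α, β, h⟩ := Ideal.mem_span_pair.1 hu
  have hpr : Prime hy := Polynomial.prime_X
  have hd : hy ∣ α * haa (k + 1 + 1) :=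
    ⟨u - β * haa (k + 1) ^ 2, by linear_combination h⟩
  obtain ⟨α', rfl⟩ := (hpr.dvd_or_dvd hd).resolve_right (hy_ndvd _)
  have hu' : u = (α' * hx + β) * haa (k + 1) ^ 2 + α' * (hy * haa k ^ 2) ^ 2 := by
    apply mul_left_cancel₀ hpr.ne_zero
    rw [← h, haa]
    ring
  rw [hu', map_add, hO_mul, hO_mul]
  exact Ideal.mem_span_pair.2 ⟨_, _, rfl⟩

theorem hO_key (p : ℕ) (a r : HK) :
    hO (hx ^ (2 * p + 1) * hy * a ^ 4 + hx ^ (2 * p + 2) * hy * r ^ 2) = hx ^ p * a ^ 2 := by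
  rw [show hx ^ (2 * p + 1) * hy * a ^ 4 + hx ^ (2 * p + 2) * hy * r ^ 2
    = (hx * hy) * (hx ^ p * a ^ 2) ^ 2 + hy * (hx ^ (p + 1) * r) ^ 2 by ring,
    map_add, hO_mul, hO_mul, hO_xy, hO_y]
  ring

theorem hpow (k : ℕ) : ∃ p, 2 ^ (k + 1) - 2 = p ∧ 2 ^ (k + 2) - 2 = 2 * p + 2 ∧
    2 ^ (k + 3) - 4 = 4 * p + 4 ∧ 2 ^ (k + 1) - 1 = p + 1 := by
  have := Nat.one_le_two_pow (n := k)
  refine ⟨_, rfl, ?_, ?_, ?_⟩ <;> simp only [pow_succ] <;> omega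

theorem hQ (k : ℕ) : hx ^ (2 ^ (k + 1) - 2) * haa k ^ 2 ∉ hJ k := by
  induction k with
  | zero =>
    intro h
    obtain ⟨α, β, h⟩ := Ideal.mem_span_pair.1 h
    have := congrArg (fun f : HK => Polynomial.eval 0 (Polynomial.eval 0 f)) h
    simp [haa, hx, hy] at this
  | succ k ih =>
    intro h
    apply ih
    obtain ⟨p, h1, h2, -, -⟩ := hpow k
    rw [show k + 1 + 1 = k + 2 from rfl, h2] at h
    rw [h1]
    have ha : haa (k + 2) ∈ hJ (k + 1) := Ideal.subset_span (by simp)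
    have h3 := (hJ (k + 1)).sub_mem ((hJ (k + 1)).mul_mem_left (hx ^ (2 * p + 1)) ha) h
    have := hJ_step k (hx ^ (2 * p + 1) * hy * haa k ^ 4 + hx ^ (2 * p + 2) * hy * 0 ^ 2) (by
      convert h3 using 1
      rw [haa]; ring)
    rwa [hO_key] at this

theorem hmain (k : ℕ) : hx ^ (2 ^ (k + 3) - 4) ∉ hJ (k + 1) := by
  intro h
  apply hQ k
  obtain ⟨p, h1, h2, h3, h4⟩ := hpow k
  rw [h3] at h
  rw [h1]
  obtain ⟨r, hr⟩ := (haa_mod k).2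
  rw [h4] at hr
  have ha : haa (k + 2) ∈ hJ (k + 1) := Ideal.subset_span (by simp)
  have h5 := (hJ (k + 1)).sub_mem ((hJ (k + 1)).mul_mem_left (hx ^ (2 * p + 1)) ha) h
  have := hJ_step k (hx ^ (2 * p + 1) * hy * haa k ^ 4 + hx ^ (2 * p + 2) * hy * r ^ 2) (by
    convert h5 using 1
    rw [haa, hr, CharTwo.add_sq]; ring)
  rwa [hO_key] at this

theorem hquot {A : Type*} [CommRing A] (J : Ideal A) (a b z : A) (ha : a ∈ J) (hb : b ∈ J)
    (c : Polynomial A) (hc : c.Monic) (d : ℕ) (hd : d < c.natDegree)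
    (h : Polynomial.C z * Polynomial.X ^ d ∈
      Ideal.span {0, Polynomial.C a, Polynomial.C b, c}) : z ∈ J := by
  by_contra hne
  have hx0 : Ideal.Quotient.mk J z ≠ 0 := by
    rwa [Ne, Ideal.Quotient.eq_zero_iff_mem]
  have : Nontrivial (A ⧸ J) := ⟨_, _, hx0⟩
  have hle : Ideal.span {0, Polynomial.C a, Polynomial.C b, c} ≤
      (Ideal.span {c.map (Ideal.Quotient.mk J)}).comap
        (Polynomial.mapRingHom (Ideal.Quotient.mk J)) := by
    rw [Ideal.span_le]
    intro f hf
    simp only [Set.mem_insert_iff, Set.mem_singleton_iff] at hf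
    rw [SetLike.mem_coe, Ideal.mem_comap, Polynomial.coe_mapRingHom]
    rcases hf with rfl | rfl | rfl | rfl
    · simp
    · rw [Polynomial.map_C, Ideal.Quotient.eq_zero_iff_mem.2 ha]; simp
    · rw [Polynomial.map_C, Ideal.Quotient.eq_zero_iff_mem.2 hb]; simp
    · exact Ideal.subset_span rfl
  have h2 := Ideal.mem_span_singleton.1 (Ideal.mem_comap.1 (hle h))
  rw [Polynomial.coe_mapRingHom, Polynomial.map_mul, Polynomial.map_pow, Polynomial.map_C,
    Polynomial.map_X] at h2
  refine (hc.map (Ideal.Quotient.mk J)).not_dvd_of_natDegree_lt ?_ ?_ h2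
  · rw [Ne, Polynomial.C_mul_X_pow_eq_monomial, Polynomial.monomial_eq_zero_iff]
    exact hx0
  · rw [Polynomial.natDegree_C_mul_X_pow _ _ hx0, hc.natDegree_map]
    exact hd

theorem hI4_map (k : ℕ) : (I4 (2 ^ (k + 3))).map hphi =
    Ideal.span {0, Polynomial.C (haa (k + 2)), Polynomial.C (hy * haa (k + 1) ^ 2),
      hphi (g4 (2 ^ (k + 3)))} := by
  have h0 : g4 (2 ^ (k + 3) - 3) = 0 := hp_n3 (k + 2)
  have h1 : hphi (g4 (2 ^ (k + 3) - 2)) = Polynomial.C (haa (k + 2)) := (hp_phi_a (k + 1)).2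
  have h2 : hphi (g4 (2 ^ (k + 3) - 1)) = Polynomial.C (hy * haa (k + 1) ^ 2) := hp_phi_b (k + 1)
  rw [I4, Ideal.map_span, Set.image_insert_eq, Set.image_insert_eq, Set.image_insert_eq,
    Set.image_singleton, h0, h1, h2, map_zero]

/-- For every `t ≥ 3`, the monomial `w_2^{2^t-4} w_4^{2^{t-2}-1}` does not belong to
`I_{2^t,4}` (equivalently, its image in `F_2[w_2,w_3,w_4]/I_{2^t,4}` is nonzero); it is a
nontrivial product of `2^t + 2^{t-2} - 5` positive-degree generators, realizing the
cup-length of the subalgebra `W_{2^t+1,4}` of `H^*(G̃_{2^t+1,4}; F_2)`. -/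
theorem stmt13 (t : ℕ) (ht : 3 ≤ t) :
    (X 0 : MvPolynomial (Fin 3) (ZMod 2)) ^ (2 ^ t - 4) * X 2 ^ (2 ^ (t - 2) - 1)
      ∉ I4 (2 ^ t) := by
  obtain ⟨k, rfl⟩ := Nat.exists_eq_add_of_le' ht
  intro hmem
  apply hmain k
  have h1 := Ideal.mem_map_of_mem hphi hmem
  rw [map_mul, map_pow, map_pow, hphi0, hphi2, show k + 3 - 2 = k + 1 by omega, hI4_map,
    ← Polynomial.C_pow] at h1
  obtain ⟨hm, hd⟩ := hp_phi_c (k + 1)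
  refine hquot (hJ (k + 1)) _ _ _ ?_ ?_ _ hm _ ?_ h1
  · exact Ideal.subset_span (Set.mem_insert _ _)
  · exact Ideal.subset_span (Set.mem_insert_of_mem _ rfl)
  · rw [hd]
    have := Nat.one_le_two_pow (n := k + 1)
    omega
end

section
/- Let t ≥ 5 and let B = F_2[w_2,w_3,w_4]/I_{2^t-2,4}. In the tensor product B ⊗_{F_2} B, writing z(x) = 1⊗x + x⊗1 for the zero-divisor associated to an element x of B, the product z(w_2)^{2^t-1} · z(w_3)^{2^{t-1}-3} · z(w_4)^{2^{t-2}-1} is nonzero (here w_i denotes the image of the variable w_i in B). Consequently, zcl(W_{n,4}) ≥ 2^t + 2^{t-1} + 2^{t-2} - 5 for all n ≥ 2^t - 2. -/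
open MvPolynomial

namespace Stmt19

abbrev A := MvPolynomial (Fin 3) (ZMod 2)

noncomputable def mon (i j k : ℕ) : A := X 0 ^ i * X 1 ^ j * X 2 ^ k

lemma mon_mul (i j k i' j' k' : ℕ) : mon i j k * mon i' j' k' = mon (i+i') (j+j') (k+k') := by
  simp only [mon]; ring

lemma monomial_eq_mon (m : Fin 3 →₀ ℕ) : (monomial m (1 : ZMod 2)) = mon (m 0) (m 1) (m 2) := by
  rw [MvPolynomial.monomial_eq, mon, Finsupp.prod_fintype _ _ (by simp)]
  simp [Fin.prod_univ_three]

noncomputable def lin {M : Type*} [AddCommGroup M] [Module (ZMod 2) M] (c : ℕ → ℕ → ℕ → M) :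
    A →ₗ[ZMod 2] M :=
  (basisMonomials (Fin 3) (ZMod 2)).constr (ZMod 2) (fun m => c (m 0) (m 1) (m 2))

noncomputable def expo (i j k : ℕ) : Fin 3 →₀ ℕ := Finsupp.equivFunOnFinite.symm ![i, j, k]

lemma lin_mon {M : Type*} [AddCommGroup M] [Module (ZMod 2) M] (c : ℕ → ℕ → ℕ → M) (i j k : ℕ) :
    lin c (mon i j k) = c i j k := by
  have h : mon i j k = basisMonomials (Fin 3) (ZMod 2) (expo i j k) := by
    rw [coe_basisMonomials]
    change _ = monomial _ (1 : ZMod 2)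
    rw [monomial_eq_mon]
    simp [expo]
  rw [h, lin, Module.Basis.constr_basis]
  simp [expo]

lemma ind {P : A → Prop} (h0 : P 0) (hm : ∀ i j k, P (mon i j k))
    (ha : ∀ f g, P f → P g → P (f + g)) (f : A) : P f := by
  induction f using MvPolynomial.induction_on' with
  | monomial m a =>
    have : a = 0 ∨ a = 1 := by revert a; decide
    rcases this with rfl | rfl
    · simpa using h0
    · rw [monomial_eq_mon]; exact hm _ _ _
  | add p q hp hq => exact ha _ _ hp hq

lemma add_self2 (f : A) : f + f = 0 := CharTwo.add_self_eq_zero f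

lemma sq_add2 (f g : A) : (f + g) ^ 2 = f ^ 2 + g ^ 2 := CharTwo.add_sq f g

/-- Cartier-type operator. -/
noncomputable def T : A →ₗ[ZMod 2] A := lin (fun i j k =>
  if i % 2 = 1 ∧ j % 2 = 1 ∧ k % 2 = 1 then mon (i / 2) (j / 2) (k / 2) else 0)

lemma T_mon (i j k : ℕ) : T (mon i j k) =
    if i % 2 = 1 ∧ j % 2 = 1 ∧ k % 2 = 1 then mon (i / 2) (j / 2) (k / 2) else 0 := lin_mon _ _ _ _

lemma T_sq (f g : A) : T (f ^ 2 * g) = f * T g := by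
  induction f using ind with
  | h0 => simp
  | ha f h hf hh => rw [sq_add2, add_mul, map_add, hf, hh, add_mul]
  | hm i j k =>
    induction g using ind with
    | h0 => simp
    | ha f h hf hh => rw [mul_add, map_add, hf, hh, map_add, mul_add]
    | hm a b c =>
      have e : mon i j k ^ 2 * mon a b c = mon (2*i+a) (2*j+b) (2*k+c) := by
        simp only [mon]; ring
      rw [e, T_mon, T_mon]
      have h1 : (2*i+a)%2 = a%2 := by omega
      have h2 : (2*j+b)%2 = b%2 := by omega
      have h3 : (2*k+c)%2 = c%2 := by omega
      rw [h1, h2, h3]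
      split_ifs
      · rw [mon_mul]; congr 1 <;> omega
      · simp

noncomputable def pp : ℕ → A
  | 0 => 1
  | 1 => X 0
  | (m+2) => X 0 * pp (m+1) ^ 2 + X 1 ^ 2 * pp m ^ 4

noncomputable def qq : ℕ → A
  | 0 => 1
  | (m+1) => pp (m+1) ^ 2 + X 2 * qq m ^ 2

def lam (n i k : ℕ) : ZMod 2 :=
  (if i + 4 = 2^(n+2) ∧ k + 2 = 2^(n+2) then 1 else 0) +
  ∑ u ∈ Finset.range (n+2), if i + 4 = 2^(n+2) + 2 * 2^u ∧ k + 2 + 2^u = 2^(n+2) then 1 else 0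

def cc : ℕ → ℕ → ℕ → ℕ → ZMod 2
  | 0, i, j, k => if j = 0 then lam 0 i k else if i = 1 ∧ j = 2 ∧ k = 0 then 1 else 0
  | (n+1), i, j, k => if j = 0 then lam (n+1) i k else
      if 2 ≤ k ∧ i % 2 = 1 ∧ j % 2 = 0 ∧ k % 2 = 0 then cc n (i/2) (j/2-1) (k/2-1) else 0

noncomputable def psi (n : ℕ) : A →ₗ[ZMod 2] ZMod 2 := lin (cc n)

lemma psi_mon (n i j k : ℕ) : psi n (mon i j k) = cc n i j k := lin_mon _ _ _ _

lemma cc_zero (n i k : ℕ) : cc n i 0 k = lam n i k := by cases n <;> simp [cc]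

lemma cc_odd (n i j k : ℕ) (h : j % 2 = 1) : cc n i j k = 0 := by
  have : j ≠ 0 := by omega
  cases n <;> simp [cc, this, h]
  omega

lemma cc_mod4 (n i j k : ℕ) (h0 : j ≠ 0) (h : j % 4 ≠ 2) : cc n i j k = 0 := by
  cases n with
  | zero => simp [cc, h0]; omega
  | succ n =>
    simp only [cc, h0, if_false]
    split_ifs with h1
    · exact cc_odd _ _ _ _ (by omega)
    · rfl

lemma lam_k0 (n i : ℕ) : lam (n+1) i 0 = 0 := by
  have h1 : 1 ≤ 2^n := Nat.one_le_two_pow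
  have e : 2^(n+1+2) = 8 * 2^n := by ring
  rw [lam, Finset.sum_eq_zero, if_neg]
  · rfl
  · omega
  · intro u hu
    have hu := Finset.mem_range.1 hu
    have : 2^u ≤ 2^(n+2) := Nat.pow_le_pow_right (by norm_num) (by omega)
    have e2 : 2^(n+2) = 4 * 2^n := by ring
    rw [if_neg]; omega

lemma cc_k0 (n i j : ℕ) : cc (n+1) i j 0 = 0 := by
  by_cases h : j = 0
  · subst h; rw [cc_zero, lam_k0]
  · simp [cc, h]

/-- Recursion. -/
lemma psi_rec (n : ℕ) (f : A) : psi (n+1) (X 1 * X 2 * f) = psi n (T f) := by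
  induction f using ind with
  | h0 => simp
  | ha f h hf hh => rw [mul_add, map_add, hf, hh, map_add, map_add]
  | hm a b c =>
    have e : X 1 * X 2 * mon a b c = mon a (b+1) (c+1) := by simp only [mon]; ring
    rw [e, T_mon, psi_mon]
    simp only [cc]
    rw [if_neg (by omega)]
    by_cases h : a % 2 = 1 ∧ b % 2 = 1 ∧ c % 2 = 1
    · rw [if_pos (by omega), if_pos h, psi_mon]; congr 1 <;> omega
    · rw [if_neg (by omega), if_neg h, map_zero]

noncomputable def ep : A →ₐ[ZMod 2] A := aeval ![X 0, 0, X 2]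
noncomputable def ek : A →ₐ[ZMod 2] A := aeval ![X 0, X 1, 0]

lemma ep0 : ep (X 0) = X 0 := by simp [ep]
lemma ep1 : ep (X 1) = 0 := by simp [ep]
lemma ep2 : ep (X 2) = X 2 := by simp [ep]
lemma ek0 : ek (X 0) = X 0 := by simp [ek]
lemma ek1 : ek (X 1) = X 1 := by simp [ek]
lemma ek2 : ek (X 2) = 0 := by simp [ek]

lemma ek_pp : ∀ m, ek (pp m) = pp m
  | 0 => by simp [pp]
  | 1 => by simp [pp, ek0]
  | (m+2) => by simp [pp, ek0, ek1, ek_pp (m+1), ek_pp m]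

lemma ep_pp : ∀ m, ep (pp m) = X 0 ^ (2^m-1)
  | 0 => by simp [pp]
  | 1 => by simp [pp, ep0]
  | (m+2) => by
    simp only [pp, map_add, map_mul, map_pow, ep0, ep1, ep_pp (m+1)]
    rw [← pow_mul, zero_pow (by norm_num), zero_mul, add_zero, ← pow_succ']
    congr 1
    have : 1 ≤ 2^(m+1) := Nat.one_le_two_pow
    have e : 2^(m+2) = 2 * 2^(m+1) := by ring
    omega

lemma ep_qq (m : ℕ) : ep (qq m) =
    ∑ v ∈ Finset.range (m+1), mon (2^(m+1) - 2^(v+1)) 0 (2^v-1) := by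
  induction m with
  | zero => simp [qq, mon]
  | succ m ih =>
    simp only [qq, map_add, map_mul, map_pow, ep2, ep_pp, ih]
    rw [Finset.sum_range_succ' _ (m+1), CharTwo.sum_sq, Finset.mul_sum, add_comm]
    have h1 : ∀ v ∈ Finset.range (m+1), X 2 * mon (2^(m+1) - 2^(v+1)) 0 (2^v-1) ^ 2
        = mon (2^(m+1+1) - 2^(v+1+1)) 0 (2^(v+1)-1) := by
      intro v hv
      have e : X 2 * mon (2^(m+1) - 2^(v+1)) 0 (2^v-1) ^ 2
        = mon (2 * (2^(m+1) - 2^(v+1))) 0 (2 * (2^v-1) + 1) := by simp only [mon]; ring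
      rw [e]
      have : 1 ≤ 2^v := Nat.one_le_two_pow
      have e1 : 2^(m+1+1) = 2 * 2^(m+1) := by ring
      have e2 : 2^(v+1+1) = 2 * 2^(v+1) := by ring
      have e3 : 2^(v+1) = 2 * 2^v := by ring
      congr 1 <;> omega
    have h2 : (X 0 ^ (2^(m+1)-1) : A) ^ 2 = mon (2^(m+1+1) - 2^(0+1)) 0 (2^0-1) := by
      have e1 : 2^(m+1+1) - 2^(0+1) = (2^(m+1) - 1) * 2 := by rw [pow_succ 2 (m+1)]; omega
      rw [e1]
      simp only [mon, ← pow_mul]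
      simp
    rw [Finset.sum_congr rfl h1, h2]

lemma psi_ek (n : ℕ) (f : A) : psi (n+1) (ek f) = 0 := by
  induction f using ind with
  | h0 => simp
  | ha f h hf hh => rw [map_add, map_add, hf, hh, add_zero]
  | hm a b c =>
    have : ek (mon a b c) = if c = 0 then mon a b 0 else 0 := by
      simp only [mon, map_mul, map_pow, ek0, ek1, ek2]
      split_ifs with h
      · simp [h]
      · rw [zero_pow h, mul_zero]
    rw [this]
    split_ifs
    · rw [psi_mon, cc_k0]
    · simp

lemma pow4_add (f g : A) : (f + g) ^ 4 = f ^ 4 + g ^ 4 := by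
  have e : ∀ f : A, f ^ 4 = (f ^ 2) ^ 2 := fun f => by ring
  rw [e, sq_add2, sq_add2, ← e, ← e]

lemma psi_ep4 (n a c : ℕ) (f : A) : psi n (mon a 0 c * f ^ 4) = psi n (mon a 0 c * ep f ^ 4) := by
  induction f using ind with
  | h0 => simp
  | ha f h hf hh => rw [map_add, pow4_add, pow4_add, mul_add, map_add, hf, hh, mul_add, map_add]
  | hm i j k =>
    have e : ep (mon i j k) = if j = 0 then mon i j k else 0 := by
      simp only [mon, map_mul, map_pow, ep0, ep1, ep2]
      split_ifs with h
      · simp [h]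
      · rw [zero_pow h]; simp
    rw [e]
    split_ifs with h
    · rfl
    · have e : mon a 0 c * mon i j k ^ 4 = mon (a+4*i) (4*j) (c+4*k) := by simp only [mon]; ring
      rw [e, psi_mon, cc_mod4 _ _ _ _ (by omega) (by omega)]
      simp

lemma psi_odd (n a b c : ℕ) (hb : b % 2 = 1) (f : A) : psi n (mon a b c * f ^ 2) = 0 := by
  induction f using ind with
  | h0 => simp
  | ha f h hf hh => rw [sq_add2, mul_add, map_add, hf, hh, add_zero]
  | hm i j k =>
    have e : mon a b c * mon i j k ^ 2 = mon (a+2*i) (b+2*j) (c+2*k) := by simp only [mon]; ring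
    rw [e, psi_mon, cc_odd]; omega

lemma psi_pp2 (n a c m : ℕ) : psi n (mon a 0 c * pp m ^ 2) = lam n (a + 2 * (2^m-1)) c := by
  have key : psi n (mon a 0 c * pp m ^ 2) = psi n (mon a 0 c * ep (pp m) ^ 2) := by
    match m with
    | 0 => simp [pp]
    | 1 => simp [pp, ep0]
    | (m+2) =>
      have e1 : mon a 0 c * pp (m+2) ^ 2
        = mon (a+2) 0 c * pp (m+1) ^ 4 + mon a 0 c * (X 1 * pp m ^ 2) ^ 4 := by
        rw [pp, sq_add2]; simp only [mon]; ring
      have e2 : mon a 0 c * ep (pp (m+2)) ^ 2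
        = mon (a+2) 0 c * ep (pp (m+1)) ^ 4 + mon a 0 c * ep (X 1 * pp m ^ 2) ^ 4 := by
        simp only [pp, map_add, map_mul, map_pow, ep0]
        rw [sq_add2]; simp only [mon]; ring
      rw [e1, e2, map_add, map_add, psi_ep4 n _ _ (pp (m+1)), psi_ep4 n _ _ (X 1 * pp m ^ 2)]
  rw [key, ep_pp, ← cc_zero, ← psi_mon]
  congr 1
  simp only [mon]; ring

lemma psi_qq (n a c m : ℕ) : psi n (mon a 0 c * qq (m+1)) = psi n (mon a 0 c * ep (qq (m+1))) := by
  match m with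
  | 0 =>
    simp [qq, pp, ep0, ep2]
  | (m+1) =>
    have e1 : mon a 0 c * qq (m+2)
      = mon a 0 c * pp (m+2) ^ 2 + mon a 0 (c+1) * pp (m+1) ^ 4 + mon a 0 (c+3) * qq m ^ 4 := by
      rw [qq, qq, sq_add2]; simp only [mon]; ring
    have e2 : mon a 0 c * ep (qq (m+2))
      = mon a 0 c * ep (pp (m+2)) ^ 2 + mon a 0 (c+1) * ep (pp (m+1)) ^ 4
        + mon a 0 (c+3) * ep (qq m) ^ 4 := by
      simp only [qq, map_add, map_mul, map_pow, ep2]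
      rw [sq_add2]; simp only [mon]; ring
    have e3 : mon a 0 c * ep (pp (m+2)) ^ 2 = mon (a + 2 * (2^(m+2)-1)) 0 c := by
      rw [ep_pp]; simp only [mon]; ring
    rw [e1, e2, e3, map_add, map_add, map_add, map_add, psi_ep4 n _ _ (pp (m+1)),
      psi_ep4 n _ _ (qq m), psi_pp2, psi_mon, cc_zero]

lemma sum_symm (n : ℕ) (f : ℕ → ℕ → ZMod 2) (hf : ∀ u v, f u v = f v u) :
    ∑ v ∈ Finset.range n, ∑ u ∈ Finset.range n, f v u = ∑ v ∈ Finset.range n, f v v := by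
  induction n with
  | zero => simp
  | succ n ih =>
    rw [Finset.sum_range_succ]
    simp only [Finset.sum_range_succ]
    rw [Finset.sum_add_distrib, ih]
    have : ∑ v ∈ Finset.range n, f v n = ∑ v ∈ Finset.range n, f n v :=
      Finset.sum_congr rfl (fun v _ => hf _ _)
    rw [this]
    have := CharTwo.add_self_eq_zero (∑ v ∈ Finset.range n, f n v)
    linear_combination this

lemma lam_qq (n a c : ℕ) :
    ∑ v ∈ Finset.range (n+2), lam n (a + (2^(n+2) - 2^(v+1))) (c + (2^v-1)) = 0 := by
  have h : ∀ v ∈ Finset.range (n+2), lam n (a + (2^(n+2) - 2^(v+1))) (c + (2^v-1)) =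
     (if a + 4 = 2 * 2^v ∧ c + 1 + 2^v = 2^(n+2) then 1 else 0) +
     ∑ u ∈ Finset.range (n+2), if a + 4 = 2 * 2^v + 2 * 2^u ∧ c + 1 + (2^v + 2^u) = 2^(n+2)
       then 1 else 0 := by
    intro v hv
    have hv := Finset.mem_range.1 hv
    have h1 : 2^(v+1) ≤ 2^(n+2) := Nat.pow_le_pow_right (by norm_num) (by omega)
    have h2 : 2^(v+1) = 2 * 2^v := by ring
    have h3 : 1 ≤ 2^v := Nat.one_le_two_pow
    rw [lam]
    congr 1
    · refine if_congr ?_ rfl rfl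
      omega
    · refine Finset.sum_congr rfl (fun u _ => if_congr ?_ rfl rfl)
      omega
  rw [Finset.sum_congr rfl h, Finset.sum_add_distrib, sum_symm]
  · rw [Finset.sum_range_succ', Finset.sum_range_succ _ (n+1)]
    rw [if_neg (by simp), if_neg (by
      have : 2^(n+2) = 2 * 2^(n+1) := by ring
      omega)]
    rw [add_zero, add_zero, ← Finset.sum_add_distrib]
    apply Finset.sum_eq_zero
    intro v _
    have : 2^(v+1) = 2 * 2^v := by ring
    have e : (a + 4 = 2 * 2^(v+1) ∧ c + 1 + 2^(v+1) = 2^(n+2)) ↔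
      (a + 4 = 2 * 2^v + 2 * 2^v ∧ c + 1 + (2^v + 2^v) = 2^(n+2)) := by omega
    rw [if_congr e rfl rfl]
    exact CharTwo.add_self_eq_zero _
  · intro u v
    refine if_congr ?_ rfl rfl
    omega

lemma psi_qq0 (n a c : ℕ) : psi n (mon a 0 c * qq (n+1)) = 0 := by
  rw [psi_qq, ep_qq, Finset.mul_sum, map_sum, ← lam_qq n a c]
  refine Finset.sum_congr rfl (fun v _ => ?_)
  rw [mon_mul, psi_mon, cc_zero]

lemma lam_pp (n a c : ℕ) : lam (n+1) (a + 1 + 2 * (2^(n+2) - 1)) c =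
    if a % 2 = 1 ∧ c % 2 = 0 ∧ 2 ≤ c then lam n (a/2 + 2 * (2^(n+1)-1)) (c/2-1) else 0 := by
  have h1 : 1 ≤ 2^n := Nat.one_le_two_pow
  have e1 : 2^(n+1) = 2 * 2^n := by ring
  have e2 : 2^(n+2) = 4 * 2^n := by ring
  have e3 : 2^(n+1+2) = 8 * 2^n := by ring
  simp only [lam]
  rw [Finset.sum_range_succ', if_neg (by omega), if_neg (by simp; omega), add_zero, zero_add]
  rw [if_neg (c := a / 2 + 2 * (2 ^ (n + 1) - 1) + 4 = 2 ^ (n + 2) ∧ c / 2 - 1 + 2 = 2 ^ (n + 2)) (by omega), zero_add]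
  split_ifs with h
  · refine Finset.sum_congr rfl (fun u _ => if_congr ?_ rfl rfl)
    have : 2^(u+1) = 2 * 2^u := by ring
    omega
  · apply Finset.sum_eq_zero
    intro u hu
    have hu := Finset.mem_range.1 hu
    have : 2^(u+1) = 2 * 2^u := by ring
    have : 2^u ≤ 2^(n+1) := Nat.pow_le_pow_right (by norm_num) (by omega)
    rw [if_neg]
    omega

lemma psi_pp0 (n a c : ℕ) : psi (n+1) (mon a 0 c * pp (n+3)) = 0 := by
  have e : mon a 0 c * pp (n+3) = mon (a+1) 0 c * pp (n+2) ^ 2 + mon a 2 c * pp (n+1) ^ 4 := by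
    rw [pp]; simp only [mon]; ring
  rw [e, map_add, psi_pp2, lam_pp]
  rcases c with _ | c
  · have : mon a 2 0 * pp (n+1) ^ 4 = ek (mon a 2 0 * pp (n+1) ^ 4) := by
      simp [mon, ek0, ek1, ek_pp]
    rw [this, psi_ek]; simp
  · have : mon a 2 (c+1) * pp (n+1) ^ 4 = X 1 * X 2 * ((pp (n+1) ^ 2) ^ 2 * mon a 1 c) := by
      simp only [mon]; ring
    rw [this, psi_rec, T_sq, T_mon]
    by_cases h : a % 2 = 1 ∧ c % 2 = 1
    · rw [if_pos (by omega), if_pos (by omega), mul_comm (pp _ ^ 2), show 1 / 2 = 0 from rfl, psi_pp2]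
      rw [show (c+1)/2-1 = c/2 by omega]
      exact CharTwo.add_self_eq_zero _
    · rw [if_neg (by omega), if_neg (by omega)]; simp

def Kills (n : ℕ) : Prop := ∀ f : A, psi n (f * qq (n+1)) = 0 ∧ psi n (f * pp (n+2)) = 0 ∧
  psi n (f * (X 1 * pp (n+1) ^ 2)) = 0

lemma kills_of_mon (n : ℕ) (h : ∀ a b c, psi n (mon a b c * qq (n+1)) = 0 ∧
    psi n (mon a b c * pp (n+2)) = 0 ∧ psi n (mon a b c * (X 1 * pp (n+1) ^ 2)) = 0) : Kills n := by
  intro f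
  induction f using ind with
  | h0 => simp
  | hm i j k => exact h i j k
  | ha f g hf hg =>
    simp only [add_mul, map_add, hf.1, hf.2.1, hf.2.2, hg.1, hg.2.1, hg.2.2, add_zero, and_self]

lemma lam0 (i k : ℕ) : lam 0 i k = (if i = 0 ∧ k = 2 then 1 else 0) +
    (if i = 2 ∧ k = 1 then 1 else 0) + (if i = 4 ∧ k = 0 then 1 else 0) := by
  simp only [lam, Finset.sum_range_succ, Finset.sum_range_zero]
  norm_num only
  split_ifs <;> first | (exfalso; omega) | decide

lemma kills_zero : Kills 0 := by
  apply kills_of_mon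
  intro a b c
  have e1 : mon a b c * qq 1 = mon (a+2) b c + mon a b (c+1) := by
    simp only [mon, qq, pp]; ring
  have e2 : mon a b c * pp 2 = mon (a+3) b c + mon a (b+2) c := by
    simp only [mon, pp]; ring
  have e3 : mon a b c * (X 1 * pp 1 ^ 2) = mon (a+2) (b+1) c := by
    simp only [mon, pp]; ring
  rw [e1, e2, e3, map_add, map_add]
  simp only [psi_mon]
  refine ⟨?_, ?_, ?_⟩
  · rcases b with _ | b
    · rw [cc_zero, cc_zero, lam0, lam0]
      split_ifs <;> first | (exfalso; omega) | decide | (simp_all; done) | (exfalso; simp_all; omega)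
    · simp [cc]
  · rcases b with _ | b
    · rw [cc_zero, lam0]
      simp only [cc]
      split_ifs <;> first | (exfalso; omega) | decide | (simp_all; done) | (exfalso; simp_all; omega)
    · simp [cc]
  · simp [cc]

lemma kills_succ (n : ℕ) (ih : Kills n) : Kills (n+1) := by
  apply kills_of_mon
  intro a b c
  have hbc : ∀ f g : A, psi (n+1) (X 1 * X 2 * f * g) = psi n (T (f * g)) := by
    intro f g; rw [mul_assoc, psi_rec]
  rcases b with _ | b
  · refine ⟨psi_qq0 _ _ _, psi_pp0 _ _ _, ?_⟩
    have : mon a 0 c * (X 1 * pp (n+1+1) ^ 2) = mon a 1 c * pp (n+2) ^ 2 := by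
      simp only [mon]; ring
    rw [this]; exact psi_odd _ _ _ _ rfl _
  · rcases c with _ | c
    · refine ⟨?_, ?_, ?_⟩
      · have : mon a (b+1) 0 * qq (n+1+1) = ek (mon a (b+1) 0 * pp (n+2) ^ 2) +
            X 1 * X 2 * (qq (n+1) ^ 2 * mon a b 0) := by
          rw [qq]
          simp only [map_mul, map_pow, mon, ek0, ek1, ek_pp]; ring
        rw [this, map_add, psi_ek, psi_rec, T_sq, T_mon]
        simp
      · have : mon a (b+1) 0 * pp (n+1+2) = ek (mon a (b+1) 0 * pp (n+1+2)) := by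
          simp only [map_mul, map_pow, mon, ek0, ek1, ek_pp]; ring
        rw [this, psi_ek]
      · have : mon a (b+1) 0 * (X 1 * pp (n+1+1) ^ 2)
            = ek (mon a (b+1) 0 * (X 1 * pp (n+1+1) ^ 2)) := by
          simp only [map_mul, map_pow, mon, ek0, ek1, ek_pp]; ring
        rw [this, psi_ek]
    · have e : mon a (b+1) (c+1) = X 1 * X 2 * mon a b c := by simp only [mon]; ring
      rw [e, hbc, hbc, hbc]
      refine ⟨?_, ?_, ?_⟩
      · have : mon a b c * qq (n+1+1) = pp (n+2) ^ 2 * mon a b c +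
          qq (n+1) ^ 2 * (X 2 * mon a b c) := by rw [qq]; ring
        rw [this, map_add, T_sq, T_sq, map_add, mul_comm, (ih _).2.1, mul_comm, (ih _).1, add_zero]
      · have : mon a b c * pp (n+1+2) = pp (n+2) ^ 2 * (X 0 * mon a b c) +
          (X 1 * pp (n+1) ^ 2) ^ 2 * mon a b c := by
          rw [show n+1+2 = (n+1)+2 from rfl, pp]; ring
        rw [this, map_add, T_sq, T_sq, map_add, mul_comm, (ih _).2.1, mul_comm, (ih _).2.2, add_zero]
      · have : mon a b c * (X 1 * pp (n+1+1) ^ 2) = pp (n+2) ^ 2 * (X 1 * mon a b c) := by ring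
        rw [this, T_sq, mul_comm, (ih _).2.1]

lemma kills (n : ℕ) : Kills n := by
  induction n with
  | zero => exact kills_zero
  | succ n ih => exact kills_succ n ih

lemma g_pos (r : ℤ) (h : 0 < r) :
    g4 r = X 0 * g4 (r-2) + X 1 * g4 (r-3) + X 2 * g4 (r-4) := by
  rw [g4, if_neg (by omega)]

lemma g_neg (r : ℤ) (h : r < 0) : g4 r = 0 := by
  rw [g4, if_pos (by omega), if_neg (by omega)]

lemma g_zero : g4 0 = 1 := by
  rw [g4, if_pos (by omega), if_pos rfl]

lemma two0 : (2 : A) = 0 := CharTwo.two_eq_zero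

lemma g_dbl (n : ℕ) : ∀ r : ℤ, r < n →
    g4 (2*r) = g4 r ^ 2 + X 0 * g4 (r-1) ^ 2 + X 2 * g4 (r-2) ^ 2 ∧
    g4 (2*r+1) = X 1 * g4 (r-1) ^ 2 := by
  induction n with
  | zero =>
    intro r hr
    have hr : r < 0 := by simpa using hr
    rw [g_neg _ (by omega : 2*r < 0), g_neg _ (by omega : 2*r+1 < 0), g_neg r hr,
      g_neg (r-1) (by omega), g_neg (r-2) (by omega)]
    simp
  | succ n ih =>
    intro r hr
    push_cast at hr
    rcases lt_trichotomy r 0 with h | h | h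
    · exact ih r (by omega)
    · subst h
      rw [g_pos (2*0+1) (by omega), mul_zero, g_zero]
      rw [g_neg (0-1) (by omega), g_neg (0-2) (by omega), g_neg (0+1-2) (by omega),
        g_neg (0+1-3) (by omega), g_neg (0+1-4) (by omega)]
      simp
    · obtain ⟨a1, b1⟩ := ih (r-1) (by omega)
      obtain ⟨a2, b2⟩ := ih (r-2) (by omega)
      rw [g_pos (2*r) (by omega), g_pos (2*r+1) (by omega)]
      rw [show 2*r-2 = 2*(r-1) by ring, show 2*r-3 = 2*(r-2)+1 by ring,
        show 2*r-4 = 2*(r-2) by ring, show 2*r+1-2 = 2*(r-1)+1 by ring,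
        show 2*r+1-3 = 2*(r-1) by ring, show 2*r+1-4 = 2*(r-2)+1 by ring, a1, b1, a2, b2,
        g_pos r h]
      rw [show r-1-1 = r-2 by ring, show r-1-2 = r-3 by ring, show r-2-1 = r-3 by ring,
        show r-2-2 = r-4 by ring]
      rw [sq_add2, sq_add2]
      constructor
      · linear_combination (X 0 * X 2 * g4 (r-3)^2) * two0
      · linear_combination (X 0 * X 1 * g4 (r-2)^2 + X 1 * X 2 * g4 (r-3)^2) * two0

lemma g_even (r : ℤ) : g4 (2*r) = g4 r ^ 2 + X 0 * g4 (r-1) ^ 2 + X 2 * g4 (r-2) ^ 2 :=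
  (g_dbl (r.toNat+1) r (by omega)).1

lemma g_odd (r : ℤ) : g4 (2*r+1) = X 1 * g4 (r-1) ^ 2 :=
  (g_dbl (r.toNat+1) r (by omega)).2

lemma g_m3 (m : ℕ) : g4 (2^(m+1)-3) = 0 := by
  induction m with
  | zero => exact g_neg _ (by norm_num)
  | succ m ih =>
    rw [show (2:ℤ)^(m+1+1)-3 = 2*(2^(m+1)-2)+1 by ring, g_odd,
      show (2:ℤ)^(m+1)-2-1 = 2^(m+1)-3 by ring, ih]
    simp

lemma g_pp : ∀ m : ℕ, g4 (2^(m+1)-2) = pp m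
  | 0 => by norm_num [g_zero, pp]
  | 1 => by
    norm_num [pp]
    rw [g_pos _ (by norm_num)]
    norm_num [g_zero, g_neg]
  | (m+2) => by
    rw [show (2:ℤ)^(m+2+1)-2 = 2*(2^(m+2)-1) by ring, g_even,
      show (2:ℤ)^(m+2)-1-2 = 2^((m+1)+1)-3 by ring, g_m3,
      show (2:ℤ)^(m+2)-1-1 = 2^((m+1)+1)-2 by ring, g_pp (m+1),
      show (2:ℤ)^(m+2)-1 = 2*(2^(m+1)-1)+1 by ring, g_odd,
      show (2:ℤ)^(m+1)-1-1 = 2^(m+1)-2 by ring, g_pp m, pp]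
    ring

lemma g_m1 (m : ℕ) : g4 (2^(m+2)-1) = X 1 * pp m ^ 2 := by
  rw [show (2:ℤ)^(m+2)-1 = 2*(2^(m+1)-1)+1 by ring, g_odd,
      show (2:ℤ)^(m+1)-1-1 = 2^(m+1)-2 by ring, g_pp m]

lemma g_qq (m : ℕ) : g4 (2^(m+2)-4) = qq m := by
  induction m with
  | zero => norm_num [g_zero, qq]
  | succ m ih =>
    rw [show (2:ℤ)^(m+1+2)-4 = 2*(2^((m+1)+1)-2) by ring, g_even, g_pp,
      show (2:ℤ)^(m+1+1)-2-1 = 2^((m+1)+1)-3 by ring, g_m3,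
      show (2:ℤ)^(m+1+1)-2-2 = 2^(m+2)-4 by ring, ih, qq]
    ring

lemma psi_I (n : ℕ) (f : A) (hf : f ∈ I4 (2^(n+3)-2)) : psi n (X 2 * f) = 0 := by
  obtain hk := kills n
  unfold I4 at hf
  have e1 : X 2 * g4 (2^(n+3)-2-3) = X 1 * pp (n+1) ^ 2 - X 1 * qq (n+1) := by
    have h := g_pos (2^((n+1)+2)-1) (by
      have : (1:ℤ) ≤ 2^n := one_le_pow₀ (by norm_num)
      have : (2:ℤ)^(n+1+2) = 8 * 2^n := by ring
      omega)
    rw [g_m1, show (2:ℤ)^((n+1)+2)-1-2 = 2^((n+2)+1)-3 by ring, g_m3,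
      show (2:ℤ)^((n+1)+2)-1-3 = 2^((n+1)+2)-4 by ring, g_qq,
      show (2:ℤ)^((n+1)+2)-1-4 = 2^(n+3)-2-3 by ring] at h
    rw [h]; ring
  have e2 : g4 (2^(n+3)-2-2) = qq (n+1) := by
    rw [show (2:ℤ)^(n+3)-2-2 = 2^((n+1)+2)-4 by ring, g_qq]
  have e3 : g4 (2^(n+3)-2-1) = 0 := by
    rw [show (2:ℤ)^(n+3)-2-1 = 2^((n+2)+1)-3 by ring, g_m3]
  have e4 : g4 (2^(n+3)-2) = pp (n+2) := by
    rw [show (2:ℤ)^(n+3)-2 = 2^((n+2)+1)-2 by ring, g_pp]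
  have key : ∀ g : A, psi n (X 2 * (g * f)) = 0 := by
    induction hf using Submodule.span_induction with
    | zero => simp
    | add x y _ _ hx hy => intro g; rw [mul_add, mul_add, map_add, hx, hy, add_zero]
    | smul a x _ hx => intro g; rw [smul_eq_mul, ← mul_assoc g, hx]
    | mem x h =>
      intro g
      simp only [Set.mem_insert_iff, Set.mem_singleton_iff] at h
      rcases h with rfl | rfl | rfl | rfl
      · rw [mul_left_comm, e1, mul_sub, map_sub, (hk _).2.2, ← mul_assoc, (hk _).1, sub_zero]
      · rw [e2, ← mul_assoc, (hk _).1]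
      · rw [e3]; simp
      · rw [e4, ← mul_assoc, (hk _).2.1]
  simpa using key 1

lemma exists_lift (I : Ideal A) (φ : A →ₗ[ZMod 2] ZMod 2) (h : ∀ f ∈ I, φ f = 0) :
    ∃ φ' : (A ⧸ I) →ₗ[ZMod 2] ZMod 2, ∀ f, φ' (Ideal.Quotient.mk I f) = φ f :=
  ⟨AddMonoidHom.toZModLinearMap 2 (QuotientAddGroup.lift I.toAddSubgroup φ.toAddMonoidHom h),
    fun _ => rfl⟩

open TensorProduct in
lemma z_pow {B : Type*} [CommRing B] [Algebra (ZMod 2) B] (x : B) (N : ℕ) :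
    ((1 : B) ⊗ₜ[ZMod 2] x + x ⊗ₜ[ZMod 2] (1 : B)) ^ N =
    ∑ i ∈ Finset.range (N+1), (N.choose i : ZMod 2) • ((x ^ i) ⊗ₜ[ZMod 2] (x ^ (N-i))) := by
  rw [add_comm, add_pow]
  refine Finset.sum_congr rfl (fun i _ => ?_)
  rw [Algebra.TensorProduct.tmul_pow, Algebra.TensorProduct.tmul_pow,
    Algebra.TensorProduct.tmul_mul_tmul, one_pow, one_pow, mul_one, one_mul, mul_comm,
    Nat.cast_smul_eq_nsmul, nsmul_eq_mul]

open TensorProduct in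
lemma eval_ne {B : Type*} [CommRing B] [Algebra (ZMod 2) B] (x y z : B) (N M K i0 k0 : ℕ)
    (φ φ' : B →ₗ[ZMod 2] ZMod 2) (hi0 : i0 ≤ N) (hk0 : k0 ≤ K)
    (h0 : ∀ i j k, i ≤ N → j ≤ M → k ≤ K → ¬ (i = i0 ∧ j = 0 ∧ k = k0) →
      (M.choose j : ZMod 2) * φ (x ^ i * y ^ j * z ^ k) = 0)
    (h1 : φ (x ^ i0 * y ^ 0 * z ^ k0) = 1)
    (h2 : φ' (x ^ (N - i0) * y ^ M * z ^ (K - k0)) = 1)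
    (c1 : (N.choose i0 : ZMod 2) = 1) (c2 : (K.choose k0 : ZMod 2) = 1) :
    ((1 : B) ⊗ₜ[ZMod 2] x + x ⊗ₜ[ZMod 2] (1 : B)) ^ N *
    ((1 : B) ⊗ₜ[ZMod 2] y + y ⊗ₜ[ZMod 2] (1 : B)) ^ M *
    ((1 : B) ⊗ₜ[ZMod 2] z + z ⊗ₜ[ZMod 2] (1 : B)) ^ K ≠ 0 := by
  intro h
  have h' := congrArg ((LinearMap.mul' (ZMod 2) (ZMod 2)) ∘ₗ (TensorProduct.map φ φ')) h
  rw [z_pow, z_pow, z_pow, Finset.sum_mul_sum, map_zero] at h'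
  simp only [Finset.sum_mul, Finset.mul_sum, map_sum, smul_mul_smul_comm,
    Algebra.TensorProduct.tmul_mul_tmul, map_smul, LinearMap.comp_apply, TensorProduct.map_tmul,
    LinearMap.mul'_apply, smul_eq_mul] at h'
  have zero : ∀ i j k, i ≤ N → j ≤ M → k ≤ K → ¬ (i = i0 ∧ j = 0 ∧ k = k0) →
      (N.choose i : ZMod 2) * (M.choose j : ZMod 2) * (K.choose k : ZMod 2) *
      (φ (x ^ i * y ^ j * z ^ k) * φ' (x ^ (N - i) * y ^ (M - j) * z ^ (K - k))) = 0 := by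
    intro i j k hi hj hk hne
    linear_combination ((N.choose i : ZMod 2) * (K.choose k : ZMod 2) *
      φ' (x ^ (N - i) * y ^ (M - j) * z ^ (K - k))) * h0 i j k hi hj hk hne
  have r : ∀ {a b : ℕ}, a ∈ Finset.range (b+1) → a ≤ b := fun h =>
    Nat.lt_succ_iff.1 (Finset.mem_range.1 h)
  rw [Finset.sum_eq_single_of_mem k0 (Finset.mem_range.2 (by omega))
      (fun k hk hne => Finset.sum_eq_zero fun i hi => Finset.sum_eq_zero fun j hj =>
        zero i j k (r hi) (r hj) (r hk) (fun h => hne h.2.2)),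
    Finset.sum_eq_single_of_mem i0 (Finset.mem_range.2 (by omega))
      (fun i hi hne => Finset.sum_eq_zero fun j hj =>
        zero i j k0 (r hi) (r hj) hk0 (fun h => hne h.1)),
    Finset.sum_eq_single_of_mem 0 (Finset.mem_range.2 (by omega))
      (fun j hj hne => zero i0 j k0 hi0 (r hj) hk0 (fun h => hne h.2.1))] at h'
  rw [h1, c1, c2, Nat.sub_zero, h2] at h'
  simp at h'

lemma lucas (n k : ℕ) : (n.choose k : ZMod 2) = ((n % 2).choose (k % 2) : ZMod 2) *
    ((n / 2).choose (k / 2) : ZMod 2) := by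
  have := Choose.choose_modEq_choose_mod_mul_choose_div_nat (p := 2) (n := n) (k := k)
  rw [← ZMod.natCast_eq_natCast_iff] at this
  simpa using this

lemma choose_even (m j : ℕ) (hm : m % 4 = 1) (hj : j % 4 = 2) : (m.choose j : ZMod 2) = 0 := by
  rw [lucas, lucas (m/2), show m / 2 % 2 = 0 by omega, show j / 2 % 2 = 1 by omega]
  simp

lemma choose_3 (m : ℕ) (hm : m % 4 = 3) : (m.choose (m-3) : ZMod 2) = 1 := by
  rw [Nat.choose_symm (by omega), lucas, lucas (m/2), show m / 2 % 2 = 1 by omega,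
    show m % 2 = 1 by omega]
  simp

lemma choose_2 (m : ℕ) (hm : m % 4 = 3) : (m.choose (m-2) : ZMod 2) = 1 := by
  rw [Nat.choose_symm (by omega), lucas, lucas (m/2), show m / 2 % 2 = 1 by omega,
    show m % 2 = 1 by omega]
  simp

lemma cc_one (n : ℕ) : cc n (2^(n+1)-1) (2^(n+2)-2) (2^(n+1)-2) = 1 := by
  induction n with
  | zero => simp [cc]
  | succ n ih =>
    have h1 : 1 ≤ 2^n := Nat.one_le_two_pow
    have e1 : 2^(n+1) = 2 * 2^n := by ring
    have e2 : 2^(n+2) = 4 * 2^n := by ring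
    have e3 : 2^(n+1+1) = 4 * 2^n := by ring
    have e4 : 2^(n+1+2) = 8 * 2^n := by ring
    rw [cc, if_neg (by omega), if_pos (by omega), ← ih]
    congr 1 <;> omega

lemma lam_small (n i k : ℕ) (hn : 2 ≤ n) (hk : k + 1 ≤ 2^(n+1)) : lam n i (k+1) =
    if i = 2^(n+3)-1-3 ∧ k = 2^(n+1)-1-2 then 1 else 0 := by
  have h1 : 2^2 ≤ 2^n := Nat.pow_le_pow_right (by norm_num) hn
  have e1 : 2^(n+1) = 2 * 2^n := by ring
  have e2 : 2^(n+2) = 4 * 2^n := by ring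
  have e3 : 2^(n+3) = 8 * 2^n := by ring
  rw [lam, if_neg (by omega), zero_add, Finset.sum_range_succ, Finset.sum_eq_zero, zero_add]
  · refine if_congr ?_ rfl rfl
    omega
  · intro u hu
    have hu := Finset.mem_range.1 hu
    have : 2^u ≤ 2^n := Nat.pow_le_pow_right (by norm_num) (by omega)
    rw [if_neg]; omega

end Stmt19

open TensorProduct in
/-- Proposition 5.4 (key step): let `t ≥ 5` and `B = F_2[w_2,w_3,w_4]/I_{2^t-2,4}`.
In `B ⊗_{F_2} B`, with `z(x) = 1⊗x + x⊗1`, the product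
`z(w̃_2)^{2^t-1} · z(w̃_3)^{2^{t-1}-3} · z(w̃_4)^{2^{t-2}-1}` is nonzero
(whence `zcl(W_{n,4}) ≥ 2^t + 2^{t-1} + 2^{t-2} - 5` for all `n ≥ 2^t - 2`). -/
theorem stmt19 (t : ℕ) (ht : 5 ≤ t) :
    ((1 : MvPolynomial (Fin 3) (ZMod 2) ⧸ I4 (2 ^ t - 2)) ⊗ₜ[ZMod 2]
          Ideal.Quotient.mk (I4 (2 ^ t - 2)) (X 0)
        + Ideal.Quotient.mk (I4 (2 ^ t - 2)) (X 0) ⊗ₜ[ZMod 2]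
          (1 : MvPolynomial (Fin 3) (ZMod 2) ⧸ I4 (2 ^ t - 2))) ^ (2 ^ t - 1)
      * ((1 : MvPolynomial (Fin 3) (ZMod 2) ⧸ I4 (2 ^ t - 2)) ⊗ₜ[ZMod 2]
            Ideal.Quotient.mk (I4 (2 ^ t - 2)) (X 1)
          + Ideal.Quotient.mk (I4 (2 ^ t - 2)) (X 1) ⊗ₜ[ZMod 2]
            (1 : MvPolynomial (Fin 3) (ZMod 2) ⧸ I4 (2 ^ t - 2))) ^ (2 ^ (t - 1) - 3)
      * ((1 : MvPolynomial (Fin 3) (ZMod 2) ⧸ I4 (2 ^ t - 2)) ⊗ₜ[ZMod 2]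
            Ideal.Quotient.mk (I4 (2 ^ t - 2)) (X 2)
          + Ideal.Quotient.mk (I4 (2 ^ t - 2)) (X 2) ⊗ₜ[ZMod 2]
            (1 : MvPolynomial (Fin 3) (ZMod 2) ⧸ I4 (2 ^ t - 2))) ^ (2 ^ (t - 2) - 1)
      ≠ 0 := by
  obtain ⟨n, rfl⟩ : ∃ n, t = n + 3 := ⟨t - 3, by omega⟩
  have hn : 2 ≤ n := by omega
  rw [show n + 3 - 1 = n + 2 by omega, show n + 3 - 2 = n + 1 by omega]
  have h1 : 2^2 ≤ 2^n := Nat.pow_le_pow_right (by norm_num) hn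
  have e1 : 2^(n+1) = 2 * 2^n := by ring
  have e2 : 2^(n+2) = 4 * 2^n := by ring
  have e3 : 2^(n+3) = 8 * 2^n := by ring
  have h4 : 2^n % 4 = 0 := by
    obtain ⟨m, rfl⟩ : ∃ m, n = m + 2 := ⟨n - 2, by omega⟩
    have : 2^(m+2) = 4 * 2^m := by ring
    omega
  obtain ⟨φ, hφ⟩ := Stmt19.exists_lift (I4 (2^(n+3)-2))
    (Stmt19.psi n ∘ₗ LinearMap.mulLeft (ZMod 2) (X 2)) (Stmt19.psi_I n)
  have hφm : ∀ i j k, φ (Ideal.Quotient.mk (I4 (2^(n+3)-2)) (X 0) ^ i *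
      Ideal.Quotient.mk (I4 (2^(n+3)-2)) (X 1) ^ j *
      Ideal.Quotient.mk (I4 (2^(n+3)-2)) (X 2) ^ k) = Stmt19.cc n i j (k+1) := by
    intro i j k
    rw [← map_pow, ← map_pow, ← map_pow, ← map_mul, ← map_mul, hφ, LinearMap.comp_apply,
      LinearMap.mulLeft_apply, ← Stmt19.psi_mon]
    congr 1
    simp only [Stmt19.mon]; ring
  refine Stmt19.eval_ne _ _ _ (2^(n+3)-1) (2^(n+2)-3) (2^(n+1)-1) (2^(n+3)-1-3) (2^(n+1)-1-2) φ
    (φ ∘ₗ LinearMap.mulLeft (ZMod 2)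
      (Ideal.Quotient.mk (I4 (2^(n+3)-2)) (Stmt19.mon (2^(n+1)-4) 1 (2^(n+1)-5))))
    (by omega) (by omega) ?_ ?_ ?_ ?_ ?_
  · intro i j k hi hj hk hne
    rw [hφm]
    by_cases hj0 : j = 0
    · subst hj0
      rw [Stmt19.cc_zero, Stmt19.lam_small n i k hn (by omega), if_neg (by tauto), mul_zero]
    · by_cases hj4 : j % 4 = 2
      · rw [Stmt19.choose_even _ _ (by omega) hj4, zero_mul]
      · rw [Stmt19.cc_mod4 _ _ _ _ hj0 hj4, mul_zero]
  · rw [hφm, Stmt19.cc_zero, Stmt19.lam_small n _ _ hn (by omega), if_pos ⟨rfl, rfl⟩]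
  · rw [← map_pow, ← map_pow, ← map_pow, ← map_mul, ← map_mul, LinearMap.comp_apply,
      LinearMap.mulLeft_apply, ← map_mul, hφ, LinearMap.comp_apply,
      LinearMap.mulLeft_apply, ← Stmt19.cc_one n, ← Stmt19.psi_mon]
    congr 1
    have : ∀ a b c d e f : ℕ, (X 2 : Stmt19.A) * (Stmt19.mon a b c * (X 0 ^ d * X 1 ^ e * X 2 ^ f))
        = Stmt19.mon (a+d) (b+e) (c+f+1) := by
      intro a b c d e f
      simp only [Stmt19.mon]; ring
    rw [this]
    congr 1 <;> omega
  · exact Stmt19.choose_3 _ (by omega)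
  · exact Stmt19.choose_2 _ (by omega)
end
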